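/- Let q ≥ 4, let B be a Baer subplane of PG(2,q²) secant to ℓ∞ and C an F_q-conic contained in B with C ∩ ℓ∞ = ∅, and suppose the unique F_{q²}-conic C⁺ containing C meets ℓ∞ in two distinct points P̄, Q̄. Let α be a plane of PG(4,q) not contained in Σ∞ whose affine points are exactly the φ-images of the affine points of B. Then P̄, Q̄ ∉ B, φ(C) is a nondegenerate conic contained in α that is disjoint from Σ∞, and the extension of φ(C) to PG(4,q²) meets each of the lines PQ^q and P^qQ in exactly one point, where P, Q are the points of the transversal g corresponding to P̄, Q̄. -/

import Mathlib

open scoped Classical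
open Matrix

noncomputable section

namespace BaerConics

/-- Points of the projective space `PG(n-1, K)` as projectivization of `Fin n → K`. -/
abbrev PP (K : Type) [Field K] (n : ℕ) : Type := Projectivization K (Fin n → K)

variable {K : Type} [Field K] {m n : ℕ}

/-- The (at most one) projective point determined by a vector:  empty if `v = 0`,
and the singleton `{[v]}` otherwise. -/
def projPt (v : Fin n → K) : Set (PP K n) :=
  {p | ∃ h : v ≠ 0, p = Projectivization.mk K v h}

/-- The set of projective points lying in a linear subspace. -/
def ptsOf (W : Submodule K (Fin n → K)) : Set (PP K n) :=
  {p | p.rep ∈ W}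

/-- The projective line through two points (as the set of points of the span). -/
def lineTh (P Q : PP K n) : Set (PP K n) :=
  ptsOf (Submodule.span K {P.rep, Q.rep})

/-- `X` is a projective flat of projective dimension `d`. -/
def IsFlat (d : ℕ) (X : Set (PP K n)) : Prop :=
  ∃ W : Submodule K (Fin n → K), Module.finrank K W = d + 1 ∧ X = ptsOf W

/-- Image of a set of vectors under the projective map induced by a matrix. -/
def mimg (M : Matrix (Fin m) (Fin n) K) (X : Set (Fin n → K)) : Set (PP K m) :=
  {p | ∃ v ∈ X, p ∈ projPt (M.mulVec v)}

/-- Coordinatewise application of a ring homomorphism to a vector. -/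
def mapVec {L : Type} [Field L] (σ : K →+* L) (v : Fin n → K) : Fin n → L :=
  fun i => σ (v i)

lemma mulVec_inj (M : Matrix (Fin n) (Fin n) K) (hM : IsUnit M.det) :
    Function.Injective M.mulVec := by
  intro a b hab
  have h := congrArg (fun v => M⁻¹.mulVec v) hab
  simpa [Matrix.mulVec_mulVec, Matrix.nonsing_inv_mul M hM] using h

/-- The projective transformation induced by an invertible matrix. -/
def pmap (M : Matrix (Fin n) (Fin n) K) (hM : IsUnit M.det) (p : PP K n) : PP K n :=
  Projectivization.mk K (M.mulVec p.rep) (by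
    intro h
    apply p.rep_nonzero
    have h0 : M.mulVec p.rep = M.mulVec 0 := by simpa [Matrix.mulVec_zero] using h
    exact mulVec_inj M hM h0)

/-- The map induced on projective points by the coordinatewise `q`-power map. -/
def frobPt (q : ℕ) (p : PP K n) : PP K n :=
  Projectivization.mk K (fun i => p.rep i ^ q) (by
    obtain ⟨i, hi⟩ := Function.ne_iff.mp p.rep_nonzero
    intro h
    exact pow_ne_zero q (by simpa using hi) (by simpa using congrFun h i))

/-- The line at infinity `z = 0` of `PG(2, K)`. -/
def linf (K : Type) [Field K] : Set (PP K 3) := {p | p.rep 2 = 0}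

/-- Coordinatewise application of the algebra map to a vector. -/
def algVec (F : Type) {K : Type} [Field F] [Field K] [Algebra F K] {n : ℕ}
    (v : Fin n → F) : Fin n → K := fun i => algebraMap F K (v i)

/-- Vectors representing the points of the standard Baer subline of `ℓ∞`. -/
def sublineVecs (F K : Type) [Field F] [Field K] [Algebra F K] : Set (Fin 3 → K) :=
  {v | ∃ θ : F, v = ![algebraMap F K θ, 1, 0]} ∪ {![1, 0, 0]}

/-- Nonzero vectors representing the points of `ℓ∞`. -/
def linfVecs (K : Type) [Field K] : Set (Fin 3 → K) := {v | v ≠ 0 ∧ v 2 = 0}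

/-- Vectors with all coordinates in (the image of) `F`, representing the canonical
Baer subplane. -/
def subplaneVecs (F K : Type) [Field F] [Field K] [Algebra F K] : Set (Fin 3 → K) :=
  {v | ∃ w : Fin 3 → F, w ≠ 0 ∧ v = algVec F w}

/-- Vectors of the standard conic with parameters in `S`. -/
def conicVecs {K : Type} [Field K] (S : Set K) : Set (Fin 3 → K) :=
  {v | ∃ θ ∈ S, v = ![1, θ, θ ^ 2]} ∪ {![0, 0, 1]}

/-- `b` is a Baer subline of the line `ℓ` of `PG(2,q²)`. -/
def IsBaerSublineOf (F : Type) {K : Type} [Field F] [Field K] [Algebra F K]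
    (b ℓ : Set (PP K 3)) : Prop :=
  ∃ M : Matrix (Fin 3) (Fin 3) K, IsUnit M.det ∧
    ℓ = mimg M (linfVecs K) ∧ b = mimg M (sublineVecs F K)

/-- `B` is a Baer subplane of `PG(2,q²)`. -/
def IsBaerSubplane (F : Type) {K : Type} [Field F] [Field K] [Algebra F K]
    (B : Set (PP K 3)) : Prop :=
  ∃ M : Matrix (Fin 3) (Fin 3) K, IsUnit M.det ∧ B = mimg M (subplaneVecs F K)

/-- `C` is the image under `PGL(3,K)` of the standard conic with parameters in `S`. -/
def IsConicOver {K : Type} [Field K] (S : Set K) (C : Set (PP K 3)) : Prop :=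
  ∃ M : Matrix (Fin 3) (Fin 3) K, IsUnit M.det ∧ C = mimg M (conicVecs S)

/-- An `F_q`-conic of `PG(2,q²)`: a nondegenerate conic of a Baer subplane. -/
def IsFqConic (F : Type) {K : Type} [Field F] [Field K] [Algebra F K]
    (C : Set (PP K 3)) : Prop :=
  IsConicOver (Set.range (algebraMap F K)) C

/-- An `F_{q²}`-conic of `PG(2,q²)`: a nondegenerate conic. -/
def IsFq2Conic {K : Type} [Field K] (C : Set (PP K 3)) : Prop :=
  IsConicOver (Set.univ : Set K) C

/-- `𝒦` is an `ℓ∞`-Baer pencil with vertex `P`. -/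
def IsLinfBaerPencil (F : Type) {K : Type} [Field F] [Field K] [Algebra F K]
    (𝒦 : Set (PP K 3)) (P : PP K 3) : Prop :=
  P ∈ linf K ∧ ∃ ℓ b : Set (PP K 3), IsBaerSublineOf F b ℓ ∧ P ∉ ℓ ∧
    (∃! X, X ∈ b ∩ linf K) ∧ 𝒦 = ⋃ X ∈ b, lineTh P X

/-- `m` is a line of the Baer subplane `B`, with extension (full line) `ℓ`. -/
def IsLineOfExt {K : Type} [Field K] (q : ℕ) (B m ℓ : Set (PP K 3)) : Prop :=
  IsFlat 1 ℓ ∧ m = B ∩ ℓ ∧ m.ncard = q + 1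

/-- `m` is a line of the Baer subplane `B`. -/
def IsLineOf {K : Type} [Field K] (q : ℕ) (B m : Set (PP K 3)) : Prop :=
  ∃ ℓ, IsLineOfExt q B m ℓ

/-- `P` and `Q` are conjugate with respect to the Baer subline `b` of `ℓ∞`. -/
def ConjWrtSubline (F : Type) {K : Type} [Field F] [Field K] [Algebra F K]
    (q : ℕ) (b : Set (PP K 3)) (P Q : PP K 3) : Prop :=
  ∃ (M : Matrix (Fin 3) (Fin 3) K) (hM : IsUnit M.det),
    mimg M (linfVecs K) = linf K ∧ b = mimg M (sublineVecs F K) ∧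
    ∃ P₀ : PP K 3, P = pmap M hM P₀ ∧ Q = pmap M hM (frobPt q P₀)

/-- A representative vector for the point `(δ,1,0)` (resp. `(1,0,0)`) of `ℓ∞`. -/
def ptInfVec {K : Type} [Field K] : Option K → Fin 3 → K
  | some δ => ![δ, 1, 0]
  | none => ![1, 0, 0]

lemma ptInfVec_ne {K : Type} [Field K] (t : Option K) : ptInfVec t ≠ 0 := by
  cases t with
  | none => intro h; have h0 := congrFun h 0; simp [ptInfVec] at h0
  | some δ => intro h; have h0 := congrFun h 1; simp [ptInfVec] at h0

/-- The point of `ℓ∞` with parameter `δ ∈ K ∪ {∞}`. -/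
def ptInf {K : Type} [Field K] (t : Option K) : PP K 3 :=
  Projectivization.mk K (ptInfVec t) (ptInfVec_ne t)

/-- The hyperplane at infinity `z = 0` of `PG(4, F)`. -/
def sinf (F : Type) [Field F] : Set (PP F 5) := {p | p.rep 4 = 0}

/-- Affine coordinates of the Bruck-Bose image of an affine point of `PG(2,q²)`. -/
def bbVec {F K : Type} [Field F] [Field K] (c0 c1 : K → F) (p : PP K 3) : Fin 5 → F :=
  ![c0 (p.rep 0 / p.rep 2), c1 (p.rep 0 / p.rep 2),
    c0 (p.rep 1 / p.rep 2), c1 (p.rep 1 / p.rep 2), 1]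

/-- The Bruck-Bose map (meaningful on affine points of `PG(2,q²)`). -/
def bb {F K : Type} [Field F] [Field K] (c0 c1 : K → F) (p : PP K 3) : PP F 5 :=
  Projectivization.mk F (bbVec c0 c1 p) (by
    intro h
    have h4 := congrFun h 4
    simp [bbVec] at h4)

/-- First spanning vector of the spread line with parameter `δ ∈ K ∪ {∞}`. -/
def spreadV1 {F K : Type} [Field F] [Field K] (c0 c1 : K → F) : Option K → Fin 5 → F
  | some δ => ![c0 δ, c1 δ, 1, 0, 0]
  | none => ![1, 0, 0, 0, 0]

/-- Second spanning vector of the spread line with parameter `δ ∈ K ∪ {∞}`. -/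
def spreadV2 {F K : Type} [Field F] [Field K] (c0 c1 : K → F) (t0 t1 : F) :
    Option K → Fin 5 → F
  | some δ => ![t0 * c1 δ, c0 δ + t1 * c1 δ, 0, 1, 0]
  | none => ![0, 1, 0, 0, 0]

/-- The line of the regular spread `S` with parameter `δ ∈ K ∪ {∞}`. -/
def spreadLine {F K : Type} [Field F] [Field K] (c0 c1 : K → F) (t0 t1 : F)
    (t : Option K) : Set (PP F 5) :=
  ptsOf (Submodule.span F {spreadV1 c0 c1 t, spreadV2 c0 c1 t0 t1 t})

/-- The extension `[T]⋆` of a spread line to `PG(4,q²)`. -/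
def extSpreadLine (F : Type) {K : Type} [Field F] [Field K] [Algebra F K]
    (c0 c1 : K → F) (t0 t1 : F) (t : Option K) : Set (PP K 5) :=
  ptsOf (Submodule.span K
    {algVec F (spreadV1 c0 c1 t), algVec F (spreadV2 c0 c1 t0 t1 t)})

/-- The `K`-extension of an `F`-subspace. -/
def extSub (F : Type) {K : Type} [Field F] [Field K] [Algebra F K] {n : ℕ}
    (W : Submodule F (Fin n → F)) : Submodule K (Fin n → K) :=
  Submodule.span K (algVec F '' (W : Set (Fin n → F)))

def A0v {K : Type} [Field K] (τ : K) (q : ℕ) : Fin 5 → K := ![τ ^ q, -1, 0, 0, 0]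
def A1v {K : Type} [Field K] (τ : K) (q : ℕ) : Fin 5 → K := ![0, 0, τ ^ q, -1, 0]
def B0v {K : Type} [Field K] (τ : K) : Fin 5 → K := ![τ, -1, 0, 0, 0]
def B1v {K : Type} [Field K] (τ : K) : Fin 5 → K := ![0, 0, τ, -1, 0]

/-- The transversal line `g` of the regular spread, in `PG(4,q²)`. -/
def gline {K : Type} [Field K] (τ : K) (q : ℕ) : Set (PP K 5) :=
  ptsOf (Submodule.span K {A0v τ q, A1v τ q})

/-- The conjugate transversal line `g^q` of the regular spread, in `PG(4,q²)`. -/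
def gqline {K : Type} [Field K] (τ : K) : Set (PP K 5) :=
  ptsOf (Submodule.span K {B0v τ, B1v τ})

/-- Representative vector of the point `T = δA₀ + A₁` of `g`. -/
def gptVec {K : Type} [Field K] (τ : K) (q : ℕ) : Option K → Fin 5 → K
  | some δ => δ • A0v τ q + A1v τ q
  | none => A0v τ q

/-- Representative vector of the conjugate point `T^q = δ^q A₀^q + A₁^q` of `g^q`. -/
def gqptVec {K : Type} [Field K] (τ : K) (q : ℕ) : Option K → Fin 5 → K
  | some δ => δ ^ q • B0v τ + B1v τ
  | none => B0v τ

lemma gptVec_ne {K : Type} [Field K] (τ : K) (q : ℕ) (t : Option K) :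
    gptVec τ q t ≠ 0 := by
  cases t with
  | none =>
      intro h
      have := congrFun h 1
      simp [gptVec, A0v] at this
  | some δ =>
      intro h
      have := congrFun h 3
      simp [gptVec, A0v, A1v] at this

lemma gqptVec_ne {K : Type} [Field K] (τ : K) (q : ℕ) (t : Option K) :
    gqptVec τ q t ≠ 0 := by
  cases t with
  | none =>
      intro h
      have := congrFun h 1
      simp [gqptVec, B0v] at this
  | some δ =>
      intro h
      have := congrFun h 3
      simp [gqptVec, B0v, B1v] at this

/-- The point of `g` corresponding to the point of `ℓ∞` with parameter `δ ∈ K ∪ {∞}`. -/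
def gpt {K : Type} [Field K] (τ : K) (q : ℕ) (t : Option K) : PP K 5 :=
  Projectivization.mk K (gptVec τ q t) (gptVec_ne τ q t)

/-- The point of `g^q` conjugate to `gpt τ q t`. -/
def gqpt {K : Type} [Field K] (τ : K) (q : ℕ) (t : Option K) : PP K 5 :=
  Projectivization.mk K (gqptVec τ q t) (gqptVec_ne τ q t)

/-- Evaluation of the quadratic form with matrix `M` at `v`. -/
def qeval {K : Type} [Field K] {n : ℕ} (M : Matrix (Fin n) (Fin n) K) (v : Fin n → K) : K :=
  v ⬝ᵥ M.mulVec v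

/-- Vectors of the standard twisted cubic (inside the hyperplane `x₄ = 0`)
with parameters in `S`. -/
def tcVecs {K : Type} [Field K] (S : Set K) : Set (Fin 5 → K) :=
  {v | ∃ θ ∈ S, v = ![1, θ, θ ^ 2, θ ^ 3, 0]} ∪ {![0, 0, 0, 1, 0]}

/-- Vectors of the standard 4-dimensional normal rational curve with parameters in `S`. -/
def nrcVecs {K : Type} [Field K] (S : Set K) : Set (Fin 5 → K) :=
  {v | ∃ θ ∈ S, v = ![1, θ, θ ^ 2, θ ^ 3, θ ^ 4]} ∪ {![0, 0, 0, 0, 1]}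

/-- `R` is a regulus of `Σ∞` in `PG(4,q)`. -/
def IsRegulus {F : Type} [Field F] (q : ℕ) (R : Set (Set (PP F 5))) : Prop :=
  R.ncard = q + 1 ∧
  (∀ ℓ ∈ R, IsFlat 1 ℓ ∧ ℓ ⊆ sinf F) ∧
  (∀ ℓ ∈ R, ∀ ℓ' ∈ R, ℓ ≠ ℓ' → ℓ ∩ ℓ' = ∅) ∧
  (∀ mℓ : Set (PP F 5), IsFlat 1 mℓ → mℓ ⊆ sinf F →
    (∃ ℓ₁ ∈ R, ∃ ℓ₂ ∈ R, ∃ ℓ₃ ∈ R, ℓ₁ ≠ ℓ₂ ∧ ℓ₁ ≠ ℓ₃ ∧ ℓ₂ ≠ ℓ₃ ∧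
      (mℓ ∩ ℓ₁).Nonempty ∧ (mℓ ∩ ℓ₂).Nonempty ∧ (mℓ ∩ ℓ₃).Nonempty) →
    ∀ ℓ ∈ R, (mℓ ∩ ℓ).Nonempty)

/-!
Choose coordinates in which `B` is the canonical subplane and `C` the standard conic over `F`.
A quadratic form vanishing at five points of that conic is a multiple of its equation, so `C⁺` is
the standard conic over `K`. As `B` is secant, `ℓ∞` has an equation over `F`, hence the Frobenius
map permutes the parameters of `P̄` and `Q̄` on `C⁺`. It fixes neither of them, since a fixed point
would lie in `B`, hence on `C`, which misses `ℓ∞`; thus it interchanges them.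

The Bruck–Bose map is inverted by the linear projection `[x₀ + x₁τ, y₀ + y₁τ, z]` of `PG(4,q²)`
from `g^q`, and an equation of `ℓ∞` over `F` makes the coordinate matrix of `C` factor through it,
so that `φ(C)` is a conic whose extension is projected onto `C⁺`. The point of the extension lying
over `P̄` is determined by its images under this projection and under the conjugate one, from `g`.
Those images are `P̄` and, by the interchange, the conjugate of `Q̄`, so the point is on `PQ^q`; it
is the only one there because `PQ^q` is projected to `P̄`.
-/

section Frobenius

variable {F : Type} [Field F] [Fintype F] [Algebra F K]

lemma mem_range_algebraMap_of_pow_card_eq {x : K} (hx : x ^ Fintype.card F = x) :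
    x ∈ Set.range (algebraMap F K) := by
  have hX : (.X ^ Fintype.card F - .X : Polynomial F).Splits := by
    simpa using (FiniteField.isSplittingField_sub F F).splits
  refine hX.mem_range_of_isRoot (FiniteField.X_pow_card_sub_X_ne_zero F Fintype.one_lt_card) ?_
  simp [hx]

lemma frobeniusAlgHom_involutive [Fintype K] (hK : Fintype.card K = Fintype.card F ^ 2) :
    Function.Involutive (FiniteField.frobeniusAlgHom F K) := fun x => by
  simp only [FiniteField.coe_frobeniusAlgHom]
  rw [← pow_mul, ← sq, ← hK, FiniteField.pow_card]

end Frobenius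

section Projective

lemma mk_mem_projPt {v w : Fin n → K} (hw : w ≠ 0) :
    Projectivization.mk K w hw ∈ projPt v ↔ ∃ c : K, c ≠ 0 ∧ v = c • w := by
  constructor
  · rintro ⟨hv, h⟩
    obtain ⟨c, hc⟩ := (Projectivization.mk_eq_mk_iff K v w hv hw).1 h.symm
    exact ⟨c, c.ne_zero, hc.symm⟩
  · rintro ⟨c, hc, rfl⟩
    exact ⟨smul_ne_zero hc hw,
      (Projectivization.mk_eq_mk_iff' K _ _ _ _).2 ⟨c⁻¹, inv_smul_smul₀ hc w⟩⟩

lemma mem_projPt {v : Fin n → K} {p : PP K n} :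
    p ∈ projPt v ↔ ∃ c : K, c ≠ 0 ∧ v = c • p.rep := by
  conv_lhs => rw [← p.mk_rep]
  exact mk_mem_projPt p.rep_nonzero

lemma mk_mem_projPt_self {v : Fin n → K} (hv : v ≠ 0) : Projectivization.mk K v hv ∈ projPt v :=
  ⟨hv, rfl⟩

lemma projPt_smul (v : Fin n → K) {c : K} (hc : c ≠ 0) : projPt (c • v) = projPt v := by
  ext p
  simp only [mem_projPt]
  constructor
  · rintro ⟨d, hd, h⟩
    exact ⟨c⁻¹ * d, mul_ne_zero (inv_ne_zero hc) hd, by rw [mul_smul, ← h, inv_smul_smul₀ hc]⟩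
  · rintro ⟨d, hd, rfl⟩
    exact ⟨c * d, mul_ne_zero hc hd, (mul_smul c d _).symm⟩

lemma ncard_projPt {v : Fin n → K} (hv : v ≠ 0) : (projPt v).ncard = 1 :=
  Set.ncard_eq_one.2 ⟨Projectivization.mk K v hv, Set.ext fun _ => exists_prop_of_true hv⟩

lemma mk_mem_ptsOf {W : Submodule K (Fin n → K)} {w : Fin n → K} (hw : w ≠ 0) :
    Projectivization.mk K w hw ∈ ptsOf W ↔ w ∈ W := by
  obtain ⟨c, hc⟩ := Projectivization.exists_smul_eq_mk_rep K w hw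
  rw [ptsOf, Set.mem_ofPred_eq, ← hc]
  exact W.smul_mem_iff c.ne_zero

lemma mk_mem_linf {w : Fin 3 → K} (hw : w ≠ 0) : Projectivization.mk K w hw ∈ linf K ↔ w 2 = 0 := by
  obtain ⟨c, hc⟩ := Projectivization.exists_smul_eq_mk_rep K w hw
  rw [linf, Set.mem_ofPred_eq, ← hc]
  exact c.mul_right_eq_zero

lemma lineTh_comm (P Q : PP K n) : lineTh P Q = lineTh Q P := by
  rw [lineTh, lineTh, Set.pair_comm]

lemma mk_mem_lineTh {v w x : Fin n → K} (hv : v ≠ 0) (hw : w ≠ 0) (hx : x ≠ 0) :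
    Projectivization.mk K x hx ∈
        lineTh (Projectivization.mk K v hv) (Projectivization.mk K w hw) ↔
      ∃ a b : K, a • v + b • w = x := by
  obtain ⟨c, hc⟩ := Projectivization.exists_smul_eq_mk_rep K v hv
  obtain ⟨d, hd⟩ := Projectivization.exists_smul_eq_mk_rep K w hw
  rw [lineTh, mk_mem_ptsOf, ← hc, ← hd, Submodule.mem_span_pair]
  constructor
  · rintro ⟨a, b, h⟩
    exact ⟨a * c, b * d, by rw [mul_smul, mul_smul]; exact h⟩
  · rintro ⟨a, b, h⟩
    refine ⟨a * ↑c⁻¹, b * ↑d⁻¹, ?_⟩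
    rw [mul_smul, mul_smul]
    exact (congrArg₂ (a • · + b • ·) (inv_smul_smul c v) (inv_smul_smul d w)).trans h

lemma mk_mem_mimg {M : Matrix (Fin m) (Fin n) K} {X : Set (Fin n → K)} {w : Fin m → K}
    (hw : w ≠ 0) :
    Projectivization.mk K w hw ∈ mimg M X ↔ ∃ v ∈ X, ∃ c : K, c ≠ 0 ∧ M *ᵥ v = c • w :=
  exists_congr fun _ => and_congr_right fun _ => mk_mem_projPt hw

lemma mimg_smul (M : Matrix (Fin m) (Fin n) K) (X : Set (Fin n → K)) {c : K} (hc : c ≠ 0) :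
    mimg (c • M) X = mimg M X := by
  ext p
  simp only [mimg, smul_mulVec, projPt_smul _ hc]

lemma mimg_mul {l : ℕ} (M : Matrix (Fin m) (Fin n) K) (A : Matrix (Fin n) (Fin l) K)
    (X : Set (Fin l → K)) : mimg (M * A) X = mimg M (A.mulVec '' X) := by
  ext p
  simp only [mimg, Set.mem_ofPred_eq, Set.exists_mem_image, mulVec_mulVec]

lemma mulVec_ne_zero {M : Matrix (Fin n) (Fin n) K} (hM : IsUnit M.det) {v : Fin n → K}
    (hv : v ≠ 0) : M *ᵥ v ≠ 0 := fun h => hv (mulVec_inj M hM (h.trans (mulVec_zero M).symm))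

end Projective

section Rational

variable {F : Type} [Field F] [Algebra F K]

lemma algVec_injective : Function.Injective (algVec F : (Fin n → F) → Fin n → K) :=
  (algebraMap F K).injective.comp_left

lemma algVec_zero : algVec F (0 : Fin n → F) = (0 : Fin n → K) :=
  funext fun _ => map_zero (algebraMap F K)

lemma algVec_ne_zero {w : Fin n → F} (hw : w ≠ 0) : (algVec F w : Fin n → K) ≠ 0 :=
  fun h => hw (algVec_injective (h.trans algVec_zero.symm))

lemma algVec_smul (c : F) (w : Fin n → F) :
    (algVec F (c • w) : Fin n → K) = algebraMap F K c • algVec F w :=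
  funext fun i => map_mul (algebraMap F K) c (w i)

lemma algVec_mulVec (H : Matrix (Fin m) (Fin n) F) (w : Fin n → F) :
    (algVec F (H *ᵥ w) : Fin m → K) = H.map (algebraMap F K) *ᵥ algVec F w :=
  funext fun i => RingHom.map_mulVec (algebraMap F K) H w i

lemma mapVec_mulVec {L : Type} [Field L] (σ : K →+* L) (M : Matrix (Fin m) (Fin n) K)
    (v : Fin n → K) : mapVec σ (M *ᵥ v) = M.map σ *ᵥ mapVec σ v :=
  funext fun i => RingHom.map_mulVec σ M v i

lemma mapVec_smul {L : Type} [Field L] (σ : K →+* L) (c : K) (v : Fin n → K) :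
    mapVec σ (c • v) = σ c • mapVec σ v :=
  funext fun i => map_mul σ c (v i)

lemma isUnit_det_map_iff (H : Matrix (Fin n) (Fin n) F) :
    IsUnit (H.map (algebraMap F K)).det ↔ IsUnit H.det := by
  rw [← RingHom.mapMatrix_apply, ← RingHom.map_det, isUnit_map_iff]

variable (F) in
/-- A vector over `K` is `F`-rational if it is a multiple of a vector over `F`, that is, if it is
zero or represents a point of the canonical subgeometry `PG(n-1, F)` of `PG(n-1, K)`. -/
def IsRational (v : Fin n → K) : Prop :=
  ∃ c : K, ∃ w : Fin n → F, v = c • algVec F w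

lemma IsRational.smul {v : Fin n → K} (hv : IsRational F v) (c : K) : IsRational F (c • v) := by
  obtain ⟨d, w, rfl⟩ := hv
  exact ⟨c * d, w, smul_smul c d _⟩

lemma IsRational.mem_mimg_subplaneVecs {M : Matrix (Fin 3) (Fin 3) K} {v : Fin 3 → K}
    (hv : IsRational F v) {p : PP K 3} (hp : p ∈ projPt (M *ᵥ v)) :
    p ∈ mimg M (subplaneVecs F K) := by
  obtain ⟨c, w, rfl⟩ := hv
  rw [mulVec_smul] at hp
  obtain ⟨hc, hMw⟩ := smul_ne_zero_iff.1 hp.choose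
  refine ⟨_, ⟨w, ?_, rfl⟩, by rwa [projPt_smul _ hc] at hp⟩
  rintro rfl
  exact hMw (by rw [algVec_zero, mulVec_zero])

lemma isRational_of_mapVec_eq_smul {σ : K →ₐ[F] K}
    (hσ : ∀ x, σ x = x → x ∈ Set.range (algebraMap F K)) {v : Fin n → K} {k : K}
    (h : mapVec (σ : K →+* K) v = k • v) : IsRational F v := by
  by_cases hv : v = 0
  · exact ⟨0, 0, by rw [hv, zero_smul]⟩
  obtain ⟨i, hi : v i ≠ 0⟩ := Function.ne_iff.1 hv
  have hσv (j) : σ (v j) = k * v j := congrFun h j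
  have hfix (j) : σ (v j / v i) = v j / v i := by
    have hk : k ≠ 0 := left_ne_zero_of_mul (hσv i ▸ (map_ne_zero σ).2 hi)
    rw [map_div₀, hσv, hσv, mul_div_mul_left _ _ hk]
  choose w hw using fun j => hσ _ (hfix j)
  exact ⟨v i, w, funext fun j => by simp only [Pi.smul_apply, algVec, hw, smul_eq_mul,
    mul_div_cancel₀ _ hi]⟩

/-- The hypotheses say that `G` maps the standard frame of `PG(n-1, F)` to rational points. -/
lemma exists_eq_smul_map_of_isRational [NeZero n] {G : Matrix (Fin n) (Fin n) K}
    (hG : IsUnit G.det) (hcol : ∀ j, IsRational F (G.col j)) (hone : IsRational F (G *ᵥ 1)) :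
    ∃ μ : K, μ ≠ 0 ∧ ∃ H : Matrix (Fin n) (Fin n) F, IsUnit H.det ∧
      G = μ • H.map (algebraMap F K) := by
  choose d w hw using hcol
  obtain ⟨μ, f, hf⟩ := hone
  set W : Matrix (Fin n) (Fin n) F := of fun i j => w j i
  have hGW : G = W.map (algebraMap F K) * diagonal d := by
    ext i j
    rw [mul_diagonal, mul_comm]
    exact congrFun (hw j) i
  have hWK : IsUnit (W.map (algebraMap F K)).det := by
    rw [hGW, det_mul] at hG
    exact isUnit_of_mul_isUnit_left hG
  have hW : IsUnit W.det := (isUnit_det_map_iff W).1 hWK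
  have hd : d = μ • algVec F (W⁻¹ *ᵥ f) := by
    apply mulVec_inj _ hWK
    rw [mulVec_smul, ← algVec_mulVec, mulVec_mulVec, mul_nonsing_inv W hW, one_mulVec, ← hf, hGW,
      ← mulVec_mulVec]
    congr 1
    ext j
    simp [mulVec_diagonal]
  have hGH : G = μ • (W * diagonal (W⁻¹ *ᵥ f)).map (algebraMap F K) := by
    rw [hGW, hd, Matrix.map_mul, diagonal_map (map_zero _), ← Matrix.mul_smul, ← diagonal_smul]
    rfl
  have hdet : IsUnit μ ∧ IsUnit (W * diagonal (W⁻¹ *ᵥ f)).det := by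
    rw [hGH, det_smul, IsUnit.mul_iff, isUnit_det_map_iff, Fintype.card_fin,
      isUnit_pow_iff (NeZero.ne n)] at hG
    exact hG
  exact ⟨μ, hdet.1.ne_zero, _, hdet.2, hGH⟩

lemma image_map_subplaneVecs {H : Matrix (Fin 3) (Fin 3) F} (hH : IsUnit H.det) :
    (H.map (algebraMap F K)).mulVec '' subplaneVecs F K = subplaneVecs F K := by
  ext v
  constructor
  · rintro ⟨_, ⟨w, hw, rfl⟩, rfl⟩
    exact ⟨H *ᵥ w, mulVec_ne_zero hH hw, (algVec_mulVec H w).symm⟩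
  · rintro ⟨w, hw, rfl⟩
    refine ⟨_, ⟨H⁻¹ *ᵥ w, mulVec_ne_zero (isUnit_nonsing_inv_det H hH) hw, rfl⟩, ?_⟩
    rw [← algVec_mulVec, mulVec_mulVec, mul_nonsing_inv H hH, one_mulVec]

lemma isRational_of_dotProduct_eq_zero {r : Fin 3 → K} {w w' : Fin 3 → F}
    (hli : LinearIndependent F ![w, w']) (hw : r ⬝ᵥ algVec F w = 0) (hw' : r ⬝ᵥ algVec F w' = 0) :
    IsRational F r := by
  have hs : (algVec F (w ⨯₃ w') : Fin 3 → K) ≠ 0 :=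
    algVec_ne_zero (crossProduct_ne_zero_iff_linearIndependent.2 hli)
  have hcross : (algVec F (w ⨯₃ w') : Fin 3 → K) = algVec F w ⨯₃ algVec F w' := by
    ext i
    fin_cases i <;> simp [algVec, cross_apply]
  have hrs : r ⨯₃ algVec F (w ⨯₃ w') = 0 := by
    rw [hcross, cross_cross_eq_smul_sub_smul', hw', dotProduct_comm, hw, zero_smul, zero_smul,
      sub_zero]
  have hdep : ¬ LinearIndependent K ![algVec F (w ⨯₃ w'), r] := by
    rwa [← crossProduct_ne_zero_iff_linearIndependent, not_not, ← neg_eq_zero, cross_anticomm]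
  rw [LinearIndependent.pair_iff' hs] at hdep
  push Not at hdep
  obtain ⟨c, hc⟩ := hdep
  exact ⟨c, _, hc.symm⟩

lemma exists_linearIndependent_of_one_lt_ncard {M : Matrix (Fin 3) (Fin 3) K}
    (h : 1 < (mimg M (subplaneVecs F K) ∩ linf K).ncard) :
    ∃ w w' : Fin 3 → F, LinearIndependent F ![w, w'] ∧
      M 2 ⬝ᵥ algVec F w = 0 ∧ M 2 ⬝ᵥ algVec F w' = 0 := by
  obtain ⟨_, _, ⟨⟨_, ⟨w, hw₀, rfl⟩, hw, rfl⟩, hwinf⟩, ⟨⟨_, ⟨w', _, rfl⟩, hw', rfl⟩, hwinf'⟩, hne⟩ :=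
    (Set.one_lt_ncard_iff (Set.finite_of_ncard_pos (by omega))).1 h
  refine ⟨w, w', ?_, (mk_mem_linf hw).1 hwinf, (mk_mem_linf hw').1 hwinf'⟩
  rw [LinearIndependent.pair_iff' hw₀]
  rintro c rfl
  refine hne ((Projectivization.mk_eq_mk_iff' K _ _ _ _).2 ?_).symm
  exact ⟨algebraMap F K c, by rw [algVec_smul, mulVec_smul]⟩

end Rational

section Conic

variable {F : Type} [Field F] [Algebra F K]

/-- The quadratic form whose zeros are the points of the standard conic. -/
def conicForm (v : Fin 3 → K) : K := v 1 ^ 2 - v 0 * v 2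

lemma conicForm_smul (c : K) (v : Fin 3 → K) : conicForm (c • v) = c ^ 2 * conicForm v := by
  simp only [conicForm, Pi.smul_apply, smul_eq_mul]
  ring

lemma conicForm_algVec (w : Fin 3 → F) :
    conicForm (algVec F w : Fin 3 → K) = algebraMap F K (conicForm w) := by
  simp only [conicForm, algVec, map_sub, map_mul, map_pow]

lemma ne_zero_of_mem_conicVecs {S : Set K} {v : Fin 3 → K} (hv : v ∈ conicVecs S) : v ≠ 0 := by
  rcases hv with ⟨θ, -, rfl⟩ | rfl
  · exact fun h => one_ne_zero (congrFun h 0)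
  · exact fun h => one_ne_zero (congrFun h 2)

lemma conicForm_eq_zero_of_mem_conicVecs {S : Set K} {v : Fin 3 → K} (hv : v ∈ conicVecs S) :
    conicForm v = 0 := by
  rcases hv with ⟨θ, -, rfl⟩ | rfl <;> simp [conicForm]

lemma exists_eq_smul_of_conicForm_eq_zero {v : Fin 3 → K} (hv : v ≠ 0) (h : conicForm v = 0) :
    ∃ u ∈ conicVecs (Set.univ : Set K), ∃ c : K, c ≠ 0 ∧ v = c • u := by
  rw [conicForm, sub_eq_zero] at h
  by_cases h0 : v 0 = 0
  · have h1 : v 1 = 0 := by simpa [h0] using h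
    have hv2 : v = v 2 • ![0, 0, 1] := by ext i; fin_cases i <;> simp [h0, h1]
    refine ⟨_, Or.inr rfl, v 2, fun h2 => hv ?_, hv2⟩
    rw [hv2, h2, zero_smul]
  · refine ⟨_, Or.inl ⟨v 1 / v 0, trivial, rfl⟩, v 0, h0, ?_⟩
    ext i
    fin_cases i
    · simp
    · simp [mul_div_cancel₀ _ h0]
    · simp [div_pow, h, field]

lemma conicVecs_range : conicVecs (Set.range (algebraMap F K)) =
    algVec F '' conicVecs (Set.univ : Set F) := by
  have hvec (θ : F) : algVec F ![1, θ, θ ^ 2] =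
      ![1, algebraMap F K θ, algebraMap F K θ ^ 2] := by
    ext i; fin_cases i <;> simp [algVec]
  have hinf : algVec F ![0, 0, 1] = (![0, 0, 1] : Fin 3 → K) := by
    ext i; fin_cases i <;> simp [algVec]
  ext v
  constructor
  · rintro (⟨_, ⟨θ, rfl⟩, rfl⟩ | rfl)
    · exact ⟨_, Or.inl ⟨θ, trivial, rfl⟩, hvec θ⟩
    · exact ⟨_, Or.inr rfl, hinf⟩
  · rintro ⟨_, ⟨θ, -, rfl⟩ | rfl, rfl⟩
    · exact Or.inl ⟨_, ⟨θ, rfl⟩, hvec θ⟩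
    · exact Or.inr hinf

lemma mapVec_mem_conicVecs (σ : K →+* K) {v : Fin 3 → K} (hv : v ∈ conicVecs Set.univ) :
    mapVec σ v ∈ conicVecs Set.univ := by
  rcases hv with ⟨θ, -, rfl⟩ | rfl
  · refine Or.inl ⟨σ θ, trivial, ?_⟩
    ext i; fin_cases i <;> simp [mapVec]
  · right
    ext i; fin_cases i <;> simp [mapVec]

lemma mk_mem_mimg_conicVecs_univ {M : Matrix (Fin 3) (Fin 3) K} (hM : IsUnit M.det)
    {w : Fin 3 → K} (hw : w ≠ 0) :
    Projectivization.mk K w hw ∈ mimg M (conicVecs Set.univ) ↔ conicForm (M⁻¹ *ᵥ w) = 0 := by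
  rw [mk_mem_mimg hw]
  constructor
  · rintro ⟨v, hv, c, hc, h⟩
    have hwv : c • M⁻¹ *ᵥ w = v := by
      rw [← mulVec_smul, ← h, mulVec_mulVec, nonsing_inv_mul M hM, one_mulVec]
    have hform := conicForm_eq_zero_of_mem_conicVecs hv
    rw [← hwv, conicForm_smul] at hform
    exact (mul_eq_zero.1 hform).resolve_left (pow_ne_zero 2 hc)
  · intro h
    obtain ⟨u, hu, c, hc, hwu⟩ := exists_eq_smul_of_conicForm_eq_zero
      (mulVec_ne_zero (isUnit_nonsing_inv_det M hM) hw) h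
    refine ⟨u, hu, c⁻¹, inv_ne_zero hc, ?_⟩
    rw [eq_inv_smul_iff₀ hc, ← mulVec_smul, ← hwu, mulVec_mulVec, mul_nonsing_inv M hM, one_mulVec]

lemma mimg_subplaneVecs_inter_mimg_conicVecs_subset {M : Matrix (Fin 3) (Fin 3) K}
    (hM : IsUnit M.det) :
    mimg M (subplaneVecs F K) ∩ mimg M (conicVecs Set.univ) ⊆
      mimg M (conicVecs (Set.range (algebraMap F K))) := by
  rintro _ ⟨⟨_, ⟨w, hw, rfl⟩, hMw, rfl⟩, hconic⟩
  rw [mk_mem_mimg_conicVecs_univ hM, mulVec_mulVec, nonsing_inv_mul M hM, one_mulVec,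
    conicForm_algVec, map_eq_zero] at hconic
  obtain ⟨u, hu, c, hc, rfl⟩ := exists_eq_smul_of_conicForm_eq_zero hw hconic
  refine ⟨algVec F u, conicVecs_range.superset (Set.mem_image_of_mem _ hu), ?_⟩
  rw [← projPt_smul _ ((map_ne_zero (algebraMap F K)).2 hc), ← mulVec_smul, ← algVec_smul]
  exact mk_mem_projPt_self hMw

lemma conicForm_eq_qeval (v : Fin 3 → K) :
    conicForm v = qeval !![0, 0, -1; 0, 1, 0; 0, 0, 0] v := by
  simp only [conicForm, qeval, mulVec, dotProduct, Fin.sum_univ_three, of_apply, cons_val]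
  ring

lemma qeval_mulVec (A M : Matrix (Fin n) (Fin n) K) (v : Fin n → K) :
    qeval A (M *ᵥ v) = qeval (Mᵀ * A * M) v := by
  simp only [qeval, ← mulVec_mulVec, dotProduct_mulVec, vecMul_transpose]

lemma qeval_eq_mul_conicForm {ι : Type*} [Fintype ι] {f : ι → K} (hf : Function.Injective f)
    (hι : 3 < Fintype.card ι) {A : Matrix (Fin 3) (Fin 3) K}
    (hA : ∀ v ∈ conicVecs (Set.range f), qeval A v = 0) (v : Fin 3 → K) :
    qeval A v = A 1 1 * conicForm v := by
  have hqeval (w : Fin 3 → K) : qeval A w = A 0 0 * w 0 ^ 2 + (A 0 1 + A 1 0) * (w 0 * w 1) +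
      (A 0 2 + A 2 0) * (w 0 * w 2) + A 1 1 * w 1 ^ 2 + (A 1 2 + A 2 1) * (w 1 * w 2) +
      A 2 2 * w 2 ^ 2 := by
    simp only [qeval, mulVec, dotProduct, Fin.sum_univ_three]
    ring
  have h22 : A 2 2 = 0 := by simpa [hqeval] using hA _ (Or.inr rfl)
  have hpoly : Cubic.toPoly ⟨A 1 2 + A 2 1, A 0 2 + A 2 0 + A 1 1, A 0 1 + A 1 0, A 0 0⟩ = 0 := by
    refine Polynomial.eq_zero_of_natDegree_lt_card_of_eval_eq_zero _ hf (fun i => ?_)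
      (Polynomial.natDegree_cubic_le.trans_lt hι)
    have hi := hA _ (Or.inl ⟨f i, ⟨i, rfl⟩, rfl⟩)
    simp only [hqeval, h22, cons_val] at hi
    simp only [Cubic.toPoly, Polynomial.eval_add, Polynomial.eval_mul, Polynomial.eval_C,
      Polynomial.eval_pow, Polynomial.eval_X]
    linear_combination hi
  obtain ⟨h3, h2, h1, h0⟩ := Cubic.mk.inj ((Cubic.toPoly_eq_zero_iff _).1 hpoly)
  rw [hqeval, conicForm]
  linear_combination v 0 ^ 2 * h0 + v 0 * v 1 * h1 + v 0 * v 2 * h2 + v 1 * v 2 * h3 + v 2 ^ 2 * h22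

lemma eq_mimg_conicVecs_univ_of_subset {ι : Type*} [Fintype ι] {f : ι → K}
    (hf : Function.Injective f) (hι : 3 < Fintype.card ι) {M : Matrix (Fin 3) (Fin 3) K}
    (hM : IsUnit M.det) {D : Set (PP K 3)} (hD : IsFq2Conic D)
    (hMD : mimg M (conicVecs (Set.range f)) ⊆ D) : D = mimg M (conicVecs Set.univ) := by
  obtain ⟨N, hN, rfl⟩ := hD
  obtain ⟨a, ha⟩ : ∃ a, ∀ v, conicForm (N⁻¹ *ᵥ (M *ᵥ v)) = a * conicForm v := by
    simp only [conicForm_eq_qeval (_ *ᵥ _), qeval_mulVec]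
    refine ⟨_, qeval_eq_mul_conicForm hf hι fun v hv => ?_⟩
    have hMv := mulVec_ne_zero hM (ne_zero_of_mem_conicVecs hv)
    have hmem := hMD ⟨v, hv, mk_mem_projPt_self hMv⟩
    rwa [mk_mem_mimg_conicVecs_univ hN, conicForm_eq_qeval, qeval_mulVec, qeval_mulVec] at hmem
  have ha₀ : a ≠ 0 := by
    rintro rfl
    have h := ha (M⁻¹ *ᵥ (N *ᵥ ![0, 1, 0]))
    rw [mulVec_mulVec _ M, mul_nonsing_inv M hM, one_mulVec, mulVec_mulVec, nonsing_inv_mul N hN,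
      one_mulVec, zero_mul] at h
    simp [conicForm] at h
  ext p
  induction p using Projectivization.ind with
  | h w hw =>
    have hform := ha (M⁻¹ *ᵥ w)
    rw [mulVec_mulVec _ M, mul_nonsing_inv M hM, one_mulVec] at hform
    rw [mk_mem_mimg_conicVecs_univ hN, mk_mem_mimg_conicVecs_univ hM, hform, mul_eq_zero,
      or_iff_right ha₀]

lemma exists_eq_smul_map_of_isRational_conicVecs {θ : F} (hθ₀ : θ ≠ 0) (hθ₁ : θ ≠ 1)
    {G : Matrix (Fin 3) (Fin 3) K} (hG : IsUnit G.det)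
    (h : ∀ v ∈ conicVecs (Set.range (algebraMap F K)), IsRational F (G *ᵥ v)) :
    ∃ μ : K, μ ≠ 0 ∧ ∃ H : Matrix (Fin 3) (Fin 3) F, IsUnit H.det ∧
      G = μ • H.map (algebraMap F K) := by
  have hvec {x w : Fin 3 → F} (hw : w ∈ conicVecs Set.univ) (c : F) (hx : x = c • w) :
      IsRational F (G *ᵥ algVec F x) := by
    rw [hx, algVec_smul, mulVec_smul]
    exact (h _ (conicVecs_range.superset (Set.mem_image_of_mem _ hw))).smul _
  -- The columns are multiples of the points with parameters `0`, `1`, `∞`, and their sum is the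
  -- point with parameter `θ`.
  let P : Matrix (Fin 3) (Fin 3) F := !![1 - θ, θ, 0; 0, θ, 0; 0, θ, θ ^ 2 - θ]
  have hPdet : IsUnit P.det := by
    have h1 : 1 - θ ≠ 0 := sub_ne_zero.2 hθ₁.symm
    have h2 : θ ^ 2 - θ ≠ 0 := by
      rw [sq, ← mul_sub_one]
      exact mul_ne_zero hθ₀ (sub_ne_zero.2 hθ₁)
    rw [det_fin_three]
    simp [P, hθ₀, h1, h2]
  have hcol (j) : IsRational F ((G * P.map (algebraMap F K)).col j) := by
    change IsRational F (G *ᵥ algVec F (P.col j))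
    fin_cases j
    · exact hvec (Or.inl ⟨0, trivial, rfl⟩) (1 - θ) (by ext i; fin_cases i <;> simp [P])
    · exact hvec (Or.inl ⟨1, trivial, rfl⟩) θ (by ext i; fin_cases i <;> simp [P])
    · exact hvec (Or.inr rfl) (θ ^ 2 - θ) (by ext i; fin_cases i <;> simp [P])
  have hone : IsRational F ((G * P.map (algebraMap F K)) *ᵥ 1) := by
    have h1 : (1 : Fin 3 → K) = algVec F 1 := funext fun _ => (map_one _).symm
    rw [← mulVec_mulVec, h1, ← algVec_mulVec]
    refine hvec (Or.inl ⟨θ, trivial, rfl⟩) 1 ?_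
    ext i
    fin_cases i <;> simp [P, mulVec, dotProduct, Fin.sum_univ_three]
  obtain ⟨μ, hμ, H, hH, hGP⟩ := exists_eq_smul_map_of_isRational
    (by rw [det_mul]; exact hG.mul ((isUnit_det_map_iff P).2 hPdet)) hcol hone
  refine ⟨μ, hμ, H * P⁻¹, ?_, ?_⟩
  · rw [det_mul]
    exact hH.mul (isUnit_nonsing_inv_det P hPdet)
  · rw [Matrix.map_mul, ← Matrix.smul_mul, ← hGP, Matrix.mul_assoc, ← Matrix.map_mul,
      mul_nonsing_inv P hPdet, Matrix.map_one _ (map_zero _) (map_one _), Matrix.mul_one]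

end Conic

section NormalForm

variable {F : Type} [Field F] [Algebra F K]

lemma exists_eq_mimg_of_isFqConic_of_subset {θ : F} (hθ₀ : θ ≠ 0) (hθ₁ : θ ≠ 1)
    {B C : Set (PP K 3)} (hB : IsBaerSubplane F B) (hC : IsFqConic F C) (hCB : C ⊆ B) :
    ∃ M : Matrix (Fin 3) (Fin 3) K, IsUnit M.det ∧ B = mimg M (subplaneVecs F K) ∧
      C = mimg M (conicVecs (Set.range (algebraMap F K))) := by
  obtain ⟨N, hN, rfl⟩ := hB
  obtain ⟨M, hM, rfl⟩ := hC
  have hrat (v) (hv : v ∈ conicVecs (Set.range (algebraMap F K))) :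
      IsRational F ((N⁻¹ * M) *ᵥ v) := by
    have hMv := mulVec_ne_zero hM (ne_zero_of_mem_conicVecs hv)
    obtain ⟨_, ⟨w, -, rfl⟩, c, hc, h⟩ := (mk_mem_mimg hMv).1 (hCB ⟨v, hv, mk_mem_projPt_self hMv⟩)
    refine ⟨c⁻¹, w, ?_⟩
    rw [eq_inv_smul_iff₀ hc, ← mulVec_mulVec, ← mulVec_smul, ← h, mulVec_mulVec,
      nonsing_inv_mul N hN, one_mulVec]
  obtain ⟨μ, hμ, H, hH, hNM⟩ := exists_eq_smul_map_of_isRational_conicVecs hθ₀ hθ₁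
    (by rw [det_mul]; exact (isUnit_nonsing_inv_det N hN).mul hM) hrat
  have hM_eq : M = μ • (N * H.map (algebraMap F K)) := by
    rw [← Matrix.mul_smul, ← hNM, ← Matrix.mul_assoc, mul_nonsing_inv N hN, Matrix.one_mul]
  exact ⟨M, hM, by rw [hM_eq, mimg_smul _ _ hμ, mimg_mul, image_map_subplaneVecs hH], rfl⟩

lemma exists_smul_row_eq_algVec {M : Matrix (Fin 3) (Fin 3) K} (hM : IsUnit M.det)
    (h : 1 < (mimg M (subplaneVecs F K) ∩ linf K).ncard) :
    ∃ c : K, c ≠ 0 ∧ ∃ s : Fin 3 → F, (c • M) 2 = algVec F s := by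
  obtain ⟨w, w', hli, hw, hw'⟩ := exists_linearIndependent_of_one_lt_ncard h
  obtain ⟨ρ, s, hs⟩ := isRational_of_dotProduct_eq_zero hli hw hw'
  have hρ : ρ ≠ 0 := by
    rintro rfl
    rw [zero_smul] at hs
    exact hM.ne_zero (det_eq_zero_of_row_eq_zero 2 (congrFun hs))
  refine ⟨ρ⁻¹, inv_ne_zero hρ, s, ?_⟩
  change ρ⁻¹ • M 2 = _
  rw [hs, inv_smul_smul₀ hρ]

lemma exists_normalForm [Fintype F] (hF : 4 ≤ Fintype.card F) {B C D : Set (PP K 3)}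
    (hB : IsBaerSubplane F B) (hBinf : 1 < (B ∩ linf K).ncard) (hC : IsFqConic F C) (hCB : C ⊆ B)
    (hD : IsFq2Conic D) (hCD : C ⊆ D) :
    ∃ M : Matrix (Fin 3) (Fin 3) K, IsUnit M.det ∧ B = mimg M (subplaneVecs F K) ∧
      C = mimg M (conicVecs (Set.range (algebraMap F K))) ∧
      D = mimg M (conicVecs Set.univ) ∧ ∃ s : Fin 3 → F, M 2 = algVec F s := by
  obtain ⟨θ, hθ₀, hθ₁⟩ : ∃ θ : F, θ ≠ 0 ∧ θ ≠ 1 := by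
    have hcard : ({0, 1} : Finset F).card < (Finset.univ : Finset F).card := by
      rw [Finset.card_univ]
      exact Finset.card_le_two.trans_lt (by omega)
    obtain ⟨θ, -, hθ⟩ := Finset.exists_mem_notMem_of_card_lt_card hcard
    exact ⟨θ, by simpa using hθ⟩
  obtain ⟨M, hM, rfl, rfl⟩ := exists_eq_mimg_of_isFqConic_of_subset hθ₀ hθ₁ hB hC hCB
  obtain rfl := eq_mimg_conicVecs_univ_of_subset (algebraMap F K).injective hF hM hD hCD
  obtain ⟨c, hc, hs⟩ := exists_smul_row_eq_algVec hM hBinf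
  refine ⟨c • M, ?_, (mimg_smul _ _ hc).symm, (mimg_smul _ _ hc).symm, (mimg_smul _ _ hc).symm, hs⟩
  rw [det_smul]
  exact (IsUnit.mk0 _ (pow_ne_zero _ hc)).mul hM

lemma exists_conj_mem_conicVecs {σ : K →ₐ[F] K}
    (hσ : ∀ x, σ x = x → x ∈ Set.range (algebraMap F K)) {M : Matrix (Fin 3) (Fin 3) K}
    (hM : IsUnit M.det) {s : Fin 3 → F} (hs : M 2 = algVec F s) {p p' : PP K 3}
    (hpp' : mimg M (conicVecs Set.univ) ∩ linf K = {p, p'}) (hp : p ∉ mimg M (subplaneVecs F K)) :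
    ∃ u ∈ conicVecs (Set.univ : Set K),
      p ∈ projPt (M *ᵥ u) ∧ p' ∈ projPt (M *ᵥ mapVec (σ : K →+* K) u) := by
  obtain ⟨⟨u, hu, hMu, rfl⟩, hinf⟩ := hpp'.superset (Set.mem_insert p {p'})
  have hu' := mapVec_mem_conicVecs (σ : K →+* K) hu
  have hMu' := mulVec_ne_zero hM (ne_zero_of_mem_conicVecs hu')
  refine ⟨u, hu, mk_mem_projPt_self hMu, ?_⟩
  have hinf' : (M *ᵥ mapVec (σ : K →+* K) u) 2 = 0 := by
    rw [mk_mem_linf, mulVec, hs] at hinf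
    rw [mulVec, hs]
    have h := congrArg σ hinf
    rw [map_zero, dotProduct, map_sum] at h
    simp only [map_mul, algVec, AlgHom.commutes] at h
    exact h
  have hmem : Projectivization.mk K _ hMu' ∈ mimg M (conicVecs Set.univ) ∩ linf K :=
    ⟨⟨_, hu', mk_mem_projPt_self hMu'⟩, (mk_mem_linf hMu').2 hinf'⟩
  rw [hpp'] at hmem
  obtain h | rfl := hmem
  · obtain ⟨k, hk⟩ := (Projectivization.mk_eq_mk_iff' K _ _ _ _).1 h
    rw [← mulVec_smul] at hk
    exact absurd ((isRational_of_mapVec_eq_smul hσ (mulVec_inj M hM hk).symm).mem_mimg_subplaneVecs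
      (mk_mem_projPt_self hMu)) hp
  · exact mk_mem_projPt_self hMu'

end NormalForm

section BruckBose

variable {F : Type} [Field F] [Algebra F K]

/-- The projection of `PG(4,q²)` from the conjugate transversal `g^q` onto `PG(2,q²)`. On affine
points of `PG(4,q)` it is the inverse of the Bruck–Bose map, and it sends the point `T` of the
transversal `g` to `T̄`. -/
def bbProj (τ : K) : Matrix (Fin 3) (Fin 5) K :=
  !![1, τ, 0, 0, 0; 0, 0, 1, τ, 0; 0, 0, 0, 0, 1]

lemma bbProj_mulVec (τ : K) (x : Fin 5 → K) :
    bbProj τ *ᵥ x = ![x 0 + x 1 * τ, x 2 + x 3 * τ, x 4] := by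
  ext i
  fin_cases i <;> simp [bbProj, mulVec, dotProduct, Fin.sum_univ_five, mul_comm]

lemma bbProj_mulVec_gptVec (τ : K) (q : ℕ) (t : Option K) :
    bbProj τ *ᵥ gptVec τ q t = (τ ^ q - τ) • ptInfVec t := by
  rw [bbProj_mulVec]
  cases t <;> ext i <;> fin_cases i <;> simp [gptVec, A0v, A1v, ptInfVec] <;> ring

lemma bbProj_mulVec_gqptVec (τ : K) (q : ℕ) (t : Option K) : bbProj τ *ᵥ gqptVec τ q t = 0 := by
  rw [bbProj_mulVec]
  cases t <;> ext i <;> fin_cases i <;> simp [gqptVec, B0v, B1v, mul_comm]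

lemma bbProj_pow_mulVec_gptVec (τ : K) (q : ℕ) (t : Option K) :
    bbProj (τ ^ q) *ᵥ gptVec τ q t = 0 := by
  rw [bbProj_mulVec]
  cases t <;> ext i <;> fin_cases i <;> simp [gptVec, A0v, A1v, mul_comm]

lemma bbProj_pow_mulVec_gqptVec {q : ℕ} {σ : K →+* K} (hσ : ∀ x, σ x = x ^ q) (τ : K)
    (t : Option K) :
    bbProj (τ ^ q) *ᵥ gqptVec τ q t = (τ - τ ^ q) • mapVec σ (ptInfVec t) := by
  have hq : σ 0 = 0 ∧ σ 1 = 1 := ⟨map_zero σ, map_one σ⟩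
  rw [bbProj_mulVec]
  cases t <;> ext i <;> fin_cases i <;>
    simp [gqptVec, B0v, B1v, mapVec, ptInfVec, hq, ← hσ] <;> ring

lemma eq_of_bbProj_mulVec_eq {τ ρ : K} (hτρ : τ ≠ ρ) {x y : Fin 5 → K}
    (h : bbProj τ *ᵥ x = bbProj τ *ᵥ y) (h' : bbProj ρ *ᵥ x = bbProj ρ *ᵥ y) : x = y := by
  have hpair {a b c d : K} (h₁ : a + b * τ = c + d * τ) (h₂ : a + b * ρ = c + d * ρ) :
      a = c ∧ b = d := by
    have hbd : b = d := mul_right_cancel₀ (sub_ne_zero.2 hτρ) (by linear_combination h₁ - h₂)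
    exact ⟨by linear_combination h₁ - τ * hbd, hbd⟩
  simp only [bbProj_mulVec] at h h'
  obtain ⟨h0, h1⟩ := hpair (congrFun h 0) (congrFun h' 0)
  obtain ⟨h2, h3⟩ := hpair (congrFun h 1) (congrFun h' 1)
  ext i
  fin_cases i
  exacts [h0, h1, h2, h3, congrFun h 2]

lemma bbProj_mulVec_algVec_injective {τ : K} (hτ : τ ∉ Set.range (algebraMap F K)) :
    Function.Injective fun w : Fin 5 → F => bbProj τ *ᵥ algVec F w := by
  have hpair {a b c d : F} (h : algebraMap F K a + algebraMap F K b * τ =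
      algebraMap F K c + algebraMap F K d * τ) : a = c ∧ b = d := by
    have hbd : b = d := by
      by_contra hbd
      have hK : algebraMap F K b - algebraMap F K d ≠ 0 :=
        sub_ne_zero.2 ((algebraMap F K).injective.ne hbd)
      refine hτ ⟨(c - a) / (b - d), ?_⟩
      rw [map_div₀, map_sub, map_sub, div_eq_iff hK]
      linear_combination -h
    subst hbd
    exact ⟨(algebraMap F K).injective (add_right_cancel h), rfl⟩
  intro w z h
  simp only [bbProj_mulVec, algVec] at h
  obtain ⟨h0, h1⟩ := hpair (congrFun h 0)
  obtain ⟨h2, h3⟩ := hpair (congrFun h 1)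
  ext i
  fin_cases i
  exacts [h0, h1, h2, h3, (algebraMap F K).injective (congrFun h 2)]

lemma bbProj_mulVec_bbVec {τ : K} {c0 c1 : K → F}
    (hc : ∀ x, x = algebraMap F K (c0 x) + algebraMap F K (c1 x) * τ) {p : PP K 3}
    (hp : p ∉ linf K) : bbProj τ *ᵥ algVec F (bbVec c0 c1 p) = (p.rep 2)⁻¹ • p.rep := by
  have hp' : p.rep 2 ≠ 0 := hp
  rw [bbProj_mulVec]
  ext i
  fin_cases i <;> simp [algVec, bbVec, ← hc, div_eq_inv_mul, hp']

lemma bb_mem_projPt_iff {τ : K} (hτ : τ ∉ Set.range (algebraMap F K)) {c0 c1 : K → F}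
    (hc : ∀ x, x = algebraMap F K (c0 x) + algebraMap F K (c1 x) * τ) {p : PP K 3}
    (hp : p ∉ linf K) {y : Fin 5 → F} :
    bb c0 c1 p ∈ projPt y ↔ p ∈ projPt (bbProj τ *ᵥ algVec F y) := by
  have hp' : p.rep 2 ≠ 0 := hp
  have hbb := bbProj_mulVec_bbVec hc hp
  rw [bb, mk_mem_projPt, mem_projPt]
  constructor
  · rintro ⟨c, hc₀, rfl⟩
    refine ⟨algebraMap F K c * (p.rep 2)⁻¹,
      mul_ne_zero ((map_ne_zero _).2 hc₀) (inv_ne_zero hp'), ?_⟩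
    rw [algVec_smul, mulVec_smul, hbb, smul_smul]
  · rintro ⟨c, hc₀, h⟩
    have hy : algebraMap F K (y 4) = c * p.rep 2 := by
      simpa [bbProj_mulVec, algVec] using congrFun h 2
    have hy₀ : y 4 ≠ 0 := by
      rw [← map_ne_zero (algebraMap F K), hy]
      exact mul_ne_zero hc₀ hp'
    refine ⟨y 4, hy₀, bbProj_mulVec_algVec_injective hτ ?_⟩
    simp only [h, algVec_smul, mulVec_smul, hbb, hy, smul_smul, mul_inv_cancel_right₀ hp']

lemma image_bb_mimg {τ : K} (hτ : τ ∉ Set.range (algebraMap F K)) {c0 c1 : K → F}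
    (hc : ∀ x, x = algebraMap F K (c0 x) + algebraMap F K (c1 x) * τ)
    {N : Matrix (Fin 5) (Fin n) F} {X : Set (Fin n → F)}
    (hX : mimg (bbProj τ * N.map (algebraMap F K)) (algVec F '' X) ∩ linf K = ∅) :
    bb c0 c1 '' mimg (bbProj τ * N.map (algebraMap F K)) (algVec F '' X) = mimg N X := by
  have haff {p} (hp : p ∈ mimg (bbProj τ * N.map (algebraMap F K)) (algVec F '' X)) :
      p ∉ linf K := fun h => hX.subset ⟨hp, h⟩
  have hmul (w : Fin n → F) : (bbProj τ * N.map (algebraMap F K)) *ᵥ algVec F w =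
      bbProj τ *ᵥ algVec F (N *ᵥ w) := by
    rw [← mulVec_mulVec, algVec_mulVec]
  ext r
  constructor
  · rintro ⟨p, hp, rfl⟩
    obtain ⟨_, ⟨w, hw, rfl⟩, hpw⟩ := id hp
    exact ⟨w, hw, (bb_mem_projPt_iff hτ hc (haff hp)).2 (hmul w ▸ hpw)⟩
  · rintro ⟨w, hw, hNw, rfl⟩
    have hne : (bbProj τ * N.map (algebraMap F K)) *ᵥ algVec F w ≠ 0 := fun h =>
      hNw (bbProj_mulVec_algVec_injective hτ (by simp only [← hmul, h, algVec_zero, mulVec_zero]))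
    have hp : Projectivization.mk K _ hne ∈
        mimg (bbProj τ * N.map (algebraMap F K)) (algVec F '' X) :=
      ⟨_, Set.mem_image_of_mem _ hw, mk_mem_projPt_self hne⟩
    refine ⟨_, hp, ?_⟩
    obtain ⟨_, hbb⟩ := (bb_mem_projPt_iff (y := N *ᵥ w) hτ hc (haff hp)).2
      (by rw [← hmul]; exact mk_mem_projPt_self hne)
    exact hbb

lemma exists_bbProj_mul_eq {τ : K} {c0 c1 : K → F}
    (hc : ∀ x, x = algebraMap F K (c0 x) + algebraMap F K (c1 x) * τ)
    {M : Matrix (Fin 3) (Fin n) K} {s : Fin n → F} (hs : M 2 = algVec F s) :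
    ∃ N : Matrix (Fin 5) (Fin n) F, bbProj τ * N.map (algebraMap F K) = M := by
  refine ⟨of ![c0 ∘ M 0, c1 ∘ M 0, c0 ∘ M 1, c1 ∘ M 1, s], ?_⟩
  ext i j
  fin_cases i <;> simp [bbProj, mul_apply, Fin.sum_univ_five, mul_comm τ, ← hc, hs, algVec]

lemma mulVec_injective_of_mul_map {l : ℕ} {P : Matrix (Fin l) (Fin m) K}
    {N : Matrix (Fin m) (Fin n) F}
    (h : Function.Injective (P * N.map (algebraMap F K)).mulVec) :
    Function.Injective N.mulVec := by
  intro v w hvw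
  apply algVec_injective (K := K)
  apply h
  rw [← mulVec_mulVec, ← mulVec_mulVec, ← algVec_mulVec, ← algVec_mulVec, hvw]

lemma eq_smul_gptVec_add_smul_gqptVec {q : ℕ} {σ : K →+* K} (hσ : ∀ x, σ x = x ^ q) {τ : K}
    (hτ : τ ^ q ≠ τ) {x : Fin 5 → K} {t t' : Option K} {a b : K}
    (h : bbProj τ *ᵥ x = a • ptInfVec t)
    (h' : bbProj (τ ^ q) *ᵥ x = b • mapVec σ (ptInfVec t')) :
    x = (a / (τ ^ q - τ)) • gptVec τ q t + (b / (τ - τ ^ q)) • gqptVec τ q t' := by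
  refine eq_of_bbProj_mulVec_eq hτ.symm ?_ ?_
  · rw [h, mulVec_add, mulVec_smul, mulVec_smul, bbProj_mulVec_gptVec, bbProj_mulVec_gqptVec,
      smul_zero, add_zero, smul_smul, div_mul_cancel₀ _ (sub_ne_zero.2 hτ)]
  · rw [h', mulVec_add, mulVec_smul, mulVec_smul, bbProj_pow_mulVec_gptVec,
      bbProj_pow_mulVec_gqptVec hσ, smul_zero, zero_add, smul_smul,
      div_mul_cancel₀ _ (sub_ne_zero.2 hτ.symm)]

lemma mapVec_bbProj_mul_mulVec (σ : K →ₐ[F] K) (τ : K) (N : Matrix (Fin 5) (Fin n) F)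
    (v : Fin n → K) :
    mapVec (σ : K →+* K) ((bbProj τ * N.map (algebraMap F K)) *ᵥ v) =
      bbProj (σ τ) *ᵥ (N.map (algebraMap F K) *ᵥ mapVec (σ : K →+* K) v) := by
  have hN : (N.map (algebraMap F K)).map (σ : K →+* K) = N.map (algebraMap F K) := by
    ext i j
    exact σ.commutes (N i j)
  have hB : (bbProj τ).map (σ : K →+* K) = bbProj (σ τ) := by
    ext i j
    fin_cases i <;> fin_cases j <;> simp [bbProj]
  rw [mapVec_mulVec, Matrix.map_mul, hN, hB, mulVec_mulVec]

lemma mimg_inter_lineTh {q : ℕ} {σ : K →ₐ[F] K} (hσ : ∀ x, σ x = x ^ q) {τ : K} (hτ : τ ^ q ≠ τ)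
    {N : Matrix (Fin 5) (Fin n) F}
    (hN : Function.Injective (bbProj τ * N.map (algebraMap F K)).mulVec) {X : Set (Fin n → K)}
    {u v : Fin n → K} (hu : u ∈ X) (hvu : mapVec (σ : K →+* K) v = u) {t t' : Option K}
    (ht : ptInf t ∈ projPt ((bbProj τ * N.map (algebraMap F K)) *ᵥ u))
    (ht' : ptInf t' ∈ projPt ((bbProj τ * N.map (algebraMap F K)) *ᵥ v)) :
    mimg (N.map (algebraMap F K)) X ∩ lineTh (gpt τ q t) (gqpt τ q t') =
      projPt (N.map (algebraMap F K) *ᵥ u) := by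
  set L := N.map (algebraMap F K)
  obtain ⟨a, ha, hLu⟩ := (mk_mem_projPt (ptInfVec_ne t)).1 ht
  obtain ⟨b, -, hLv⟩ := (mk_mem_projPt (ptInfVec_ne t')).1 ht'
  have hconj : bbProj (τ ^ q) *ᵥ (L *ᵥ u) = σ b • mapVec (σ : K →+* K) (ptInfVec t') := by
    rw [← hσ, ← hvu, ← mapVec_bbProj_mul_mulVec, hLv, mapVec_smul]
    rfl
  ext p
  constructor
  · rintro ⟨⟨x, -, hLx, rfl⟩, hline⟩
    obtain ⟨c, d, hcd⟩ := (mk_mem_lineTh (gptVec_ne τ q t) (gqptVec_ne τ q t') hLx).1 hline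
    have hx : x = (c * (τ ^ q - τ) / a) • u := by
      apply hN
      rw [mulVec_smul, hLu, ← mulVec_mulVec, ← hcd, mulVec_add, mulVec_smul, mulVec_smul,
        bbProj_mulVec_gptVec, bbProj_mulVec_gqptVec, smul_zero, add_zero, smul_smul, smul_smul,
        div_mul_cancel₀ _ ha]
    have hLx' : L *ᵥ x = (c * (τ ^ q - τ) / a) • L *ᵥ u := by rw [← mulVec_smul, ← hx]
    rw [← projPt_smul _ (smul_ne_zero_iff.1 (hLx' ▸ hLx)).1, ← hLx']
    exact mk_mem_projPt_self hLx
  · rintro ⟨hLu₀, rfl⟩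
    have hspan := eq_smul_gptVec_add_smul_gqptVec hσ hτ (by rw [mulVec_mulVec, hLu]) hconj
    exact ⟨⟨u, hu, mk_mem_projPt_self hLu₀⟩,
      (mk_mem_lineTh (gptVec_ne τ q t) (gqptVec_ne τ q t') hLu₀).2 ⟨_, _, hspan.symm⟩⟩

lemma ncard_mimg_inter_lineTh {q : ℕ} {σ : K →ₐ[F] K} (hσ : ∀ x, σ x = x ^ q) {τ : K}
    (hτ : τ ^ q ≠ τ) {N : Matrix (Fin 5) (Fin n) F}
    (hN : Function.Injective (bbProj τ * N.map (algebraMap F K)).mulVec) {X : Set (Fin n → K)}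
    {u v : Fin n → K} (hu : u ∈ X) (hvu : mapVec (σ : K →+* K) v = u) {t t' : Option K}
    (ht : ptInf t ∈ projPt ((bbProj τ * N.map (algebraMap F K)) *ᵥ u))
    (ht' : ptInf t' ∈ projPt ((bbProj τ * N.map (algebraMap F K)) *ᵥ v)) :
    (mimg (N.map (algebraMap F K)) X ∩ lineTh (gpt τ q t) (gqpt τ q t')).ncard = 1 := by
  rw [mimg_inter_lineTh hσ hτ hN hu hvu ht ht']
  exact ncard_projPt fun h => ht.choose (by rw [← mulVec_mulVec, h, mulVec_zero])

end BruckBose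

/-- An `F_q`-conic `C`, disjoint from `ℓ∞`, in a Baer subplane `B` secant to `ℓ∞`, whose
`F_{q²}`-extension meets `ℓ∞` in two distinct points `P̄, Q̄`, corresponds in `PG(4,q)` to
a nondegenerate conic in the plane `[B]`, disjoint from `Σ∞`, whose extension meets each
of the lines `PQ^q` and `P^qQ` in exactly one point (i.e. it is a `(PQ^q)`-special
conic). -/
theorem statement_15
    {F K : Type} [Field F] [Field K] [Fintype F] [Fintype K] [Algebra F K]
    (q : ℕ) (hq : Fintype.card F = q) (hK : Fintype.card K = q ^ 2)
    (τ : K) (t0 t1 : F)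
    (hτ : τ ^ 2 = algebraMap F K t1 * τ + algebraMap F K t0)
    (hτF : τ ∉ Set.range (algebraMap F K))
    (c0 c1 : K → F)
    (hc : ∀ x : K, x = algebraMap F K (c0 x) + algebraMap F K (c1 x) * τ)
    (hq4 : 4 ≤ q)
    (B : Set (PP K 3)) (hB : IsBaerSubplane F B)
    (hsec : (B ∩ linf K).ncard = q + 1)
    (C : Set (PP K 3)) (hC : IsFqConic F C) (hCB : C ⊆ B) (hCaff : C ∩ linf K = ∅)
    (D : Set (PP K 3)) (hD : IsFq2Conic D) (hCD : C ⊆ D)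
    (tP tQ : Option K) (hne : ptInf tP ≠ ptInf tQ)
    (hDinf : D ∩ linf K = {ptInf tP, ptInf tQ})
    (Wsub : Submodule F (Fin 5 → F)) (hW3 : Module.finrank F Wsub = 3)
    (hWns : ¬ ptsOf Wsub ⊆ sinf F)
    (halpha : bb c0 c1 '' (B \ linf K) = ptsOf Wsub \ sinf F) :
    ptInf tP ∉ B ∧ ptInf tQ ∉ B ∧
    ∃ M3 : Matrix (Fin 5) (Fin 3) F, Function.Injective M3.mulVec ∧
      mimg M3 (conicVecs (Set.univ : Set F)) = bb c0 c1 '' C ∧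
      mimg M3 (conicVecs (Set.univ : Set F)) ⊆ ptsOf Wsub ∧
      mimg M3 (conicVecs (Set.univ : Set F)) ∩ sinf F = ∅ ∧
      (mimg (M3.map (algebraMap F K)) (conicVecs (Set.univ : Set K)) ∩
        lineTh (gpt τ q tP) (gqpt τ q tQ)).ncard = 1 ∧
      (mimg (M3.map (algebraMap F K)) (conicVecs (Set.univ : Set K)) ∩
        lineTh (gqpt τ q tP) (gpt τ q tQ)).ncard = 1 := by
  subst hq
  obtain ⟨M, hM, rfl, rfl, rfl, s, hs⟩ := exists_normalForm hq4 hB (by omega) hC hCB hD hCD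
  have hDB (p) (hp : p ∈ mimg M (conicVecs Set.univ) ∩ linf K) : p ∉ mimg M (subplaneVecs F K) :=
    fun hpB => hCaff.subset
      ⟨mimg_subplaneVecs_inter_mimg_conicVecs_subset hM ⟨hpB, hp.1⟩, hp.2⟩
  have hP := hDB (ptInf tP) (hDinf.superset (Or.inl rfl))
  refine ⟨hP, hDB (ptInf tQ) (hDinf.superset (Or.inr rfl)), ?_⟩
  let σ := FiniteField.frobeniusAlgHom F K
  have hσ (x) : σ x = x ^ Fintype.card F := rfl
  have hτσ : τ ^ Fintype.card F ≠ τ := mt mem_range_algebraMap_of_pow_card_eq hτF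
  obtain ⟨u, hu, hPu, hQu⟩ := exists_conj_mem_conicVecs (σ := σ)
    (fun _ => mem_range_algebraMap_of_pow_card_eq) hM hs hDinf hP
  have huu : mapVec (σ : K →+* K) (mapVec (σ : K →+* K) u) = u :=
    funext fun i => frobeniusAlgHom_involutive hK (u i)
  obtain ⟨N, rfl⟩ := exists_bbProj_mul_eq hc hs
  have hN := mulVec_inj _ hM
  have hsub := halpha.subset.trans' (Set.image_mono (Set.subset_sdiff.2
    ⟨hCB, Set.disjoint_iff_inter_eq_empty.2 hCaff⟩))
  rw [conicVecs_range] at hCaff hsub ⊢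
  rw [image_bb_mimg hτF hc hCaff, Set.subset_sdiff, Set.disjoint_iff_inter_eq_empty] at hsub
  exact ⟨N, mulVec_injective_of_mul_map hN, (image_bb_mimg hτF hc hCaff).symm, hsub.1, hsub.2,
    ncard_mimg_inter_lineTh hσ hτσ hN hu huu hPu hQu, lineTh_comm (gpt τ _ tQ) _ ▸
      ncard_mimg_inter_lineTh hσ hτσ hN (mapVec_mem_conicVecs _ hu) rfl hQu hPu⟩

end BaerConics
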